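/- Let z₁, z₂, z₃ be points in the Euclidean plane (EuclideanSpace ℝ (Fin 2)) and r₁, r₂, r₃ > 0 real numbers such that dist(z_i, z_j) = r_i + r_j for all i ≠ j (three pairwise externally tangent circles). For i ≠ j let p_{ij} = z_i + (r_i/(r_i+r_j)) • (z_j − z_i) be the tangency point of the i-th and j-th circles. Then there exists a unique pair (c, ρ) with c in the plane and ρ > 0 such that: (1) dist(c, p_{ij}) = ρ for each of the three tangency points p_{12}, p_{13}, p_{23}, and (2) dist(c, z_i)^2 = ρ^2 + r_i^2 for each i = 1, 2, 3. That is, there is a unique circle orthogonal to all three circles, intersecting them exactly at their points of tangency. -/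

import Mathlib

namespace DualCircle

/-- The squared Euclidean distance in the plane, in coordinates. -/
lemma dist_sq_eq (x y : EuclideanSpace ℝ (Fin 2)) :
    dist x y ^ 2 = (x 0 - y 0) ^ 2 + (x 1 - y 1) ^ 2 := by
  rw [EuclideanSpace.dist_sq_eq, Fin.sum_univ_two, Real.dist_eq, Real.dist_eq, sq_abs, sq_abs]

/-- A circle orthogonal to two externally tangent circles passes through their tangency point. -/
lemma dist_tangency_sq {c x y : EuclideanSpace ℝ (Fin 2)} {s t ρ : ℝ} (hs : 0 < s) (ht : 0 < t)
    (hxy : dist x y = s + t) (hx : dist c x ^ 2 = ρ ^ 2 + s ^ 2)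
    (hy : dist c y ^ 2 = ρ ^ 2 + t ^ 2) :
    dist c (x + (s / (s + t)) • (y - x)) ^ 2 = ρ ^ 2 := by
  have hd : dist x y ^ 2 = (s + t) ^ 2 := by rw [hxy]
  have hst : s + t ≠ 0 := by positivity
  obtain ⟨k, hk⟩ : ∃ k, k = s / (s + t) := ⟨_, rfl⟩
  have hks : k * (s + t) = s := by rw [hk]; field_simp
  rw [← hk]
  rw [dist_sq_eq] at *
  simp only [PiLp.add_apply, PiLp.smul_apply, PiLp.sub_apply, smul_eq_mul]
  linear_combination (1 - k) * hx + k * hy - k * (1 - k) * hd + (k * (s + t) - s) * hks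

/-- The incenter of the triangle of centers has equal power `xyw / (x + y + w)` with respect to
three mutually tangent circles of radii `x`, `y`, `w`. -/
lemma dist_incenter_sq {a b c : EuclideanSpace ℝ (Fin 2)} {x y w : ℝ}
    (hx : 0 < x) (hy : 0 < y) (hw : 0 < w) (hab : dist a b = x + y) (hac : dist a c = x + w)
    (hbc : dist b c = y + w) :
    dist (((y + w) / (2 * (x + y + w))) • a + ((x + w) / (2 * (x + y + w))) • b +
      ((x + y) / (2 * (x + y + w))) • c) a ^ 2 = x * y * w / (x + y + w) + x ^ 2 := by
  have h₁ : dist a b ^ 2 = (x + y) ^ 2 := by rw [hab]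
  have h₂ : dist a c ^ 2 = (x + w) ^ 2 := by rw [hac]
  have h₃ : dist b c ^ 2 = (y + w) ^ 2 := by rw [hbc]
  have hS : x + y + w ≠ 0 := by positivity
  rw [dist_sq_eq] at *
  simp only [PiLp.add_apply, PiLp.smul_apply, smul_eq_mul]
  field_simp
  linear_combination (x + w) * ((x + w) + (x + y)) * h₁ + (x + y) * ((x + w) + (x + y)) * h₂ -
    (x + w) * (x + y) * h₃

/-- The centers of three mutually tangent circles are not collinear. -/
lemma det_ne_zero {a b c : EuclideanSpace ℝ (Fin 2)} {x y w : ℝ}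
    (hx : 0 < x) (hy : 0 < y) (hw : 0 < w) (hab : dist a b = x + y) (hac : dist a c = x + w)
    (hbc : dist b c = y + w) :
    (a 0 - b 0) * (a 1 - c 1) - (a 1 - b 1) * (a 0 - c 0) ≠ 0 := by
  have h₁ : dist a b ^ 2 = (x + y) ^ 2 := by rw [hab]
  have h₂ : dist a c ^ 2 = (x + w) ^ 2 := by rw [hac]
  have h₃ : dist b c ^ 2 = (y + w) ^ 2 := by rw [hbc]
  rw [dist_sq_eq] at *
  have hinner : (a 0 - b 0) * (a 0 - c 0) + (a 1 - b 1) * (a 1 - c 1) =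
      x ^ 2 + x * y + x * w - y * w := by
    linear_combination (h₁ + h₂ - h₃) / 2
  have hdet : ((a 0 - b 0) * (a 1 - c 1) - (a 1 - b 1) * (a 0 - c 0)) ^ 2 =
      4 * (x * y * w * (x + y + w)) := by
    linear_combination ((a 0 - c 0) ^ 2 + (a 1 - c 1) ^ 2) * h₁ + (x + y) ^ 2 * h₂ -
      ((a 0 - b 0) * (a 0 - c 0) + (a 1 - b 1) * (a 1 - c 1) +
        (x ^ 2 + x * y + x * w - y * w)) * hinner
  intro h
  have : 0 < x * y * w * (x + y + w) := by positivity
  rw [h] at hdet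
  linarith

/-- The radical center of three circles with noncollinear centers is unique. -/
lemma eq_of_dist_sq_sub_eq {a b c p q : EuclideanSpace ℝ (Fin 2)}
    (hdet : (a 0 - b 0) * (a 1 - c 1) - (a 1 - b 1) * (a 0 - c 0) ≠ 0)
    (hb : dist p a ^ 2 - dist p b ^ 2 = dist q a ^ 2 - dist q b ^ 2)
    (hc : dist p a ^ 2 - dist p c ^ 2 = dist q a ^ 2 - dist q c ^ 2) : p = q := by
  simp only [dist_sq_eq] at hb hc
  ext i
  fin_cases i
  · refine mul_right_cancel₀ hdet ?_
    simp only [Fin.zero_eta]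
    linear_combination (-(a 1 - c 1) / 2) * hb + ((a 1 - b 1) / 2) * hc
  · refine mul_right_cancel₀ hdet ?_
    simp only [Fin.mk_one]
    linear_combination ((a 0 - c 0) / 2) * hb - ((a 0 - b 0) / 2) * hc

end DualCircle

/-- Existence and uniqueness of the dual circle: given three pairwise externally
tangent circles in the Euclidean plane, there is a unique circle orthogonal to all
three, meeting them exactly at their points of tangency. -/
theorem exists_unique_dual_circle
    (z : Fin 3 → EuclideanSpace ℝ (Fin 2)) (r : Fin 3 → ℝ)
    (hr : ∀ i, 0 < r i)
    (htan : ∀ i j, i ≠ j → dist (z i) (z j) = r i + r j) :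
    ∃! cρ : EuclideanSpace ℝ (Fin 2) × ℝ,
      0 < cρ.2 ∧
      (∀ i j, i ≠ j →
        dist cρ.1 (z i + (r i / (r i + r j)) • (z j - z i)) = cρ.2) ∧
      (∀ i, dist cρ.1 (z i) ^ 2 = cρ.2 ^ 2 + r i ^ 2) := by
  have h0 := hr 0
  have h1 := hr 1
  have h2 := hr 2
  have hpos : 0 < r 0 * r 1 * r 2 / (r 0 + r 1 + r 2) := by positivity
  obtain ⟨c, hc⟩ : ∃ c : EuclideanSpace ℝ (Fin 2), ∀ i,
      dist c (z i) ^ 2 = r 0 * r 1 * r 2 / (r 0 + r 1 + r 2) + r i ^ 2 := by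
    refine ⟨((r 1 + r 2) / (2 * (r 0 + r 1 + r 2))) • z 0 +
      ((r 0 + r 2) / (2 * (r 0 + r 1 + r 2))) • z 1 +
      ((r 0 + r 1) / (2 * (r 0 + r 1 + r 2))) • z 2, fun i => ?_⟩
    fin_cases i
    · exact DualCircle.dist_incenter_sq h0 h1 h2 (htan 0 1 (by decide)) (htan 0 2 (by decide))
        (htan 1 2 (by decide))
    · convert DualCircle.dist_incenter_sq h1 h0 h2 (htan 1 0 (by decide)) (htan 1 2 (by decide))
        (htan 0 2 (by decide)) using 3
      · rw [add_comm (r 1) (r 0), add_comm (_ • z 1)]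
      · rfl
      · ring
      · ring
      · rfl
    · convert DualCircle.dist_incenter_sq h2 h0 h1 (htan 2 0 (by decide)) (htan 2 1 (by decide))
        (htan 0 1 (by decide)) using 3
      · rw [show r 2 + r 0 + r 1 = r 0 + r 1 + r 2 by ring, add_comm (r 2) (r 0),
          add_comm (r 2) (r 1)]
        abel
      · rfl
      · ring
      · ring
      · rfl
  refine ⟨(c, √(r 0 * r 1 * r 2 / (r 0 + r 1 + r 2))), ⟨Real.sqrt_pos.2 hpos, ?_, ?_⟩, ?_⟩
  · intro i j hij
    refine (sq_eq_sq₀ dist_nonneg (Real.sqrt_nonneg _)).1 ?_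
    refine DualCircle.dist_tangency_sq (hr i) (hr j) (htan i j hij) ?_ ?_ <;>
      rw [Real.sq_sqrt hpos.le, hc]
  · intro i
    rw [Real.sq_sqrt hpos.le, hc]
  · rintro ⟨c', ρ⟩ ⟨hρ, -, horth⟩
    dsimp only at hρ horth
    obtain rfl : c' = c := by
      refine DualCircle.eq_of_dist_sq_sub_eq (DualCircle.det_ne_zero h0 h1 h2
        (htan 0 1 (by decide)) (htan 0 2 (by decide)) (htan 1 2 (by decide))) ?_ ?_ <;>
      · rw [horth, horth, hc, hc]
        ring
    have hsq : r 0 * r 1 * r 2 / (r 0 + r 1 + r 2) = ρ ^ 2 := by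
      linarith [hc 0, horth 0]
    rw [hsq, Real.sqrt_sq hρ.le]
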